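/- Let F be a nonzero polynomial in F_q[X_1,...,X_m] of degree d with d/s < q. Then the number of points P ∈ F_q^m at which mult(F,P) ≥ s (i.e., all Hasse derivatives of weight < s vanish) is at most (d/s)·q^{m-1}. Consequently, the multiplicity code Mult^s_d of order s and degree d < s·q has minimum Hamming distance (over the alphabet Σ = F_q^σ) at least q^m − (d/s)·q^{m-1}. -/

import Mathlib

/-- The `i`-th Hasse derivative of a multivariate polynomial `F`: the coefficient of `Z^i`
in `F(X + Z)`. -/
noncomputable def mvHasseDeriv {K : Type*} [CommRing K] {m : ℕ} (i : Fin m →₀ ℕ)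
    (F : MvPolynomial (Fin m) K) : MvPolynomial (Fin m) K :=
  MvPolynomial.coeff i
    (MvPolynomial.eval₂ (MvPolynomial.C.comp MvPolynomial.C)
      (fun j => MvPolynomial.C (MvPolynomial.X j) + MvPolynomial.X j) F)

/-!
This is the Schwartz–Zippel lemma with multiplicities: over a finite subset `S` of an integral
domain, the multiplicities of `F ≠ 0` at the points of `S^m` add up to at most `deg F · |S|^(m-1)`,
by induction on `m`. View `F` as a polynomial in `X₀` of degree `t` with leading coefficient `ℓ`.
If `ℓ` vanishes at `a` to order `e`, some coefficient of `Z^i` with `|i| = e` in `ℓ(a + Z)` is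
nonzero, so the coefficient `g` of `Z^i` in `F(X₀, a + Z)` is a nonzero univariate polynomial of
degree `t`. Since `F` vanishes at `(b, a)` to order at most `e` plus the multiplicity of `b` as a
root of `g`, the fibre over `a` contributes at most `|S| · e + t`; summing over `a` and applying the
induction hypothesis to `ℓ`, whose degree is at most `deg F - t`, completes the step.
Two codewords agree exactly where the difference of their polynomials has multiplicity at least `s`.
-/

section MapCoeffs

open Polynomial

variable {R A B : Type*} [CommSemiring R] [Semiring A] [Semiring B] [Algebra R A] [Algebra R B]

/-- Application of an `R`-linear map, not necessarily multiplicative, to every coefficient of a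
univariate polynomial. -/
noncomputable def mapCoeffs (φ : A →ₗ[R] B) : A[X] →ₗ[R] B[X] :=
  lsum fun k => (monomial k).restrictScalars R ∘ₗ φ

lemma mapCoeffs_monomial (φ : A →ₗ[R] B) (k : ℕ) (a : A) :
    mapCoeffs φ (monomial k a) = monomial k (φ a) := by
  simp [mapCoeffs]

lemma coeff_mapCoeffs (φ : A →ₗ[R] B) (f : A[X]) (k : ℕ) :
    (mapCoeffs φ f).coeff k = φ (f.coeff k) := by
  induction f using Polynomial.induction_on' with
  | add f g hf hg => simp only [map_add, coeff_add, hf, hg]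
  | monomial j a =>
    rw [mapCoeffs_monomial, coeff_monomial, coeff_monomial, apply_ite φ, map_zero]

lemma natDegree_mapCoeffs_le (φ : A →ₗ[R] B) (f : A[X]) :
    (mapCoeffs φ f).natDegree ≤ f.natDegree :=
  natDegree_le_iff_coeff_eq_zero.2 fun k hk => by
    rw [coeff_mapCoeffs, coeff_eq_zero_of_natDegree_lt hk, map_zero]

lemma mapCoeffs_taylor (φ : A →ₗ[R] B) (r : R) (f : A[X]) :
    mapCoeffs φ (taylor (algebraMap R A r) f) = taylor (algebraMap R B r) (mapCoeffs φ f) := by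
  ext k
  induction f using Polynomial.induction_on' with
  | add f g hf hg => simp only [map_add, coeff_add, hf, hg]
  | monomial j a =>
    simp only [coeff_mapCoeffs, mapCoeffs_monomial, taylor_coeff, hasseDeriv_monomial,
      eval_monomial, ← nsmul_eq_mul, ← map_pow, ← Algebra.commutes, ← Algebra.smul_def]
    simp only [map_smul, map_nsmul]

end MapCoeffs

lemma sum_rootMultiplicity_le_natDegree {R : Type*} [CommRing R] [IsDomain R]
    (S : Finset R) (g : Polynomial R) : ∑ b ∈ S, g.rootMultiplicity b ≤ g.natDegree := by
  classical
  calc ∑ b ∈ S, g.rootMultiplicity b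
      = ∑ b ∈ S, g.roots.count b := by simp only [Polynomial.count_roots]
    _ ≤ ∑ b ∈ S ∪ g.roots.toFinset, g.roots.count b :=
        Finset.sum_le_sum_of_subset Finset.subset_union_left
    _ = g.roots.card := Multiset.sum_count_eq_card fun b hb =>
        Finset.mem_union_right _ (Multiset.mem_toFinset.2 hb)
    _ ≤ g.natDegree := g.card_roots'

section Taylor

open MvPolynomial

variable {σ : Type*}

section Semiring

variable {R : Type*} [CommSemiring R]

/-- The Taylor expansion `F(X + P)` of `F` at the point `P`, the multivariate analogue of
`Polynomial.taylor`. -/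
noncomputable def mvTaylor (P : σ → R) : MvPolynomial σ R →ₐ[R] MvPolynomial σ R :=
  aeval fun j => X j + C (P j)

lemma mvTaylor_X (P : σ → R) (j : σ) : mvTaylor P (X j) = X j + C (P j) :=
  aeval_X _ j

/-- The multiplicity `mult(F, P)`: the order of vanishing of `F(X + P)` at the origin, which is
`⊤` for `F = 0`. -/
noncomputable def multiplicityAt (P : σ → R) (F : MvPolynomial σ R) : ℕ∞ :=
  (mvTaylor P F : MvPowerSeries σ R).order

lemma multiplicityAt_le_degree {P : σ → R} {F : MvPolynomial σ R} {i : σ →₀ ℕ}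
    (hi : coeff i (mvTaylor P F) ≠ 0) : multiplicityAt P F ≤ i.degree :=
  MvPowerSeries.order_le (by rwa [coeff_coe])

lemma le_multiplicityAt_iff_coeff {P : σ → R} {F : MvPolynomial σ R} {s : ℕ} :
    (s : ℕ∞) ≤ multiplicityAt P F ↔
      ∀ i : σ →₀ ℕ, i.degree < s → coeff i (mvTaylor P F) = 0 := by
  refine ⟨fun h i hi => ?_, fun h => MvPowerSeries.nat_le_order fun i hi => ?_⟩
  · by_contra hne
    exact (h.trans (multiplicityAt_le_degree hne)).not_gt (by exact_mod_cast hi)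
  · rw [coeff_coe, h i hi]

end Semiring

variable {R : Type*} [CommRing R]

lemma mvTaylor_injective (P : σ → R) : Function.Injective (mvTaylor P) := by
  have leftInverse : (mvTaylor (-P)).comp (mvTaylor P) = AlgHom.id R _ := by
    ext1 j
    simp [mvTaylor, algebraMap_eq]
  exact Function.LeftInverse.injective (g := mvTaylor (-P)) (DFunLike.congr_fun leftInverse)

lemma exists_degree_eq_multiplicityAt (P : σ → R) {F : MvPolynomial σ R} (hF : F ≠ 0) :
    ∃ i : σ →₀ ℕ, coeff i (mvTaylor P F) ≠ 0 ∧ (i.degree : ℕ∞) = multiplicityAt P F := by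
  have ne_zero : (mvTaylor P F : MvPowerSeries σ R) ≠ 0 := by
    rwa [Ne, coe_eq_zero_iff, map_eq_zero_iff _ (mvTaylor_injective P)]
  simpa only [multiplicityAt, coeff_coe] using MvPowerSeries.exists_coeff_ne_zero_and_order
    (MvPowerSeries.ne_zero_iff_order_finite.1 ne_zero)

end Taylor

section HasseDeriv

open MvPolynomial

variable {R : Type*} [CommRing R] {m : ℕ}

lemma eval_mvHasseDeriv (P : Fin m → R) (i : Fin m →₀ ℕ) (F : MvPolynomial (Fin m) R) :
    eval P (mvHasseDeriv i F) = coeff i (mvTaylor P F) := by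
  rw [mvHasseDeriv, ← coeff_map, eval₂_eq, mvTaylor, aeval_def, eval₂_eq]
  simp [algebraMap_eq, add_comm]

lemma le_multiplicityAt_sub_iff {P : Fin m → R} {F G : MvPolynomial (Fin m) R} {s : ℕ} :
    (s : ℕ∞) ≤ multiplicityAt P (F - G) ↔ ∀ i : Fin m →₀ ℕ, (i.sum fun _ n => n) < s →
      eval P (mvHasseDeriv i F) = eval P (mvHasseDeriv i G) := by
  simp only [le_multiplicityAt_iff_coeff, eval_mvHasseDeriv, map_sub, coeff_sub, sub_eq_zero]
  rfl

lemma le_multiplicityAt_iff {P : Fin m → R} {F : MvPolynomial (Fin m) R} {s : ℕ} :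
    (s : ℕ∞) ≤ multiplicityAt P F ↔ ∀ i : Fin m →₀ ℕ, (i.sum fun _ n => n) < s →
      eval P (mvHasseDeriv i F) = 0 := by
  simp only [le_multiplicityAt_iff_coeff, eval_mvHasseDeriv]
  rfl

end HasseDeriv

section Fibre

open MvPolynomial
open scoped Finset

variable {n : ℕ}

section Semiring

variable {R : Type*} [CommSemiring R]

lemma finSuccEquiv_mvTaylor_cons (b : R) (a : Fin n → R) (F : MvPolynomial (Fin (n + 1)) R) :
    finSuccEquiv R n (mvTaylor (Fin.cons b a : Fin (n + 1) → R) F) =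
      Polynomial.taylor (C b) ((finSuccEquiv R n F).map (mvTaylor a : _ →+* _)) := by
  have finSuccEquiv_C (r : R) : finSuccEquiv R n (C r) = Polynomial.C (C r) := by
    simp [finSuccEquiv_apply]
  induction F using MvPolynomial.induction_on with
  | C r => simp [mvTaylor, algebraMap_eq, finSuccEquiv_C]
  | add F G hF hG => simp only [map_add, hF, hG, Polynomial.map_add]
  | mul_X F j hF =>
    rw [map_mul, map_mul, map_mul, hF, Polynomial.map_mul, Polynomial.taylor_mul, mvTaylor_X]
    congr 1
    cases j using Fin.cases <;>
      simp [finSuccEquiv_X_zero, finSuccEquiv_X_succ, finSuccEquiv_C, mvTaylor_X]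

/-- The coefficient of `Z^i` in `F(X₀, a + Z)`, as a univariate polynomial in `X₀`; up to
substituting `a`, this is the Hasse derivative of `F` in all variables but the first. -/
noncomputable def fibreCoeff (a : Fin n → R) (i : Fin n →₀ ℕ) (F : MvPolynomial (Fin (n + 1)) R) :
    Polynomial R :=
  mapCoeffs (lcoeff R i) ((finSuccEquiv R n F).map (mvTaylor a : _ →+* _))

lemma coeff_fibreCoeff (a : Fin n → R) (i : Fin n →₀ ℕ) (F : MvPolynomial (Fin (n + 1)) R)
    (k : ℕ) : (fibreCoeff a i F).coeff k = coeff i (mvTaylor a ((finSuccEquiv R n F).coeff k)) := by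
  rw [fibreCoeff, coeff_mapCoeffs, Polynomial.coeff_map, lcoeff_apply, RingHom.coe_coe]

lemma natDegree_fibreCoeff_le (a : Fin n → R) (i : Fin n →₀ ℕ)
    (F : MvPolynomial (Fin (n + 1)) R) :
    (fibreCoeff a i F).natDegree ≤ (finSuccEquiv R n F).natDegree :=
  (natDegree_mapCoeffs_le _ _).trans Polynomial.natDegree_map_le

lemma coeff_taylor_fibreCoeff (b : R) (a : Fin n → R) (i : Fin n →₀ ℕ)
    (F : MvPolynomial (Fin (n + 1)) R) (k : ℕ) :
    (Polynomial.taylor b (fibreCoeff a i F)).coeff k =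
      coeff (i.cons k) (mvTaylor (Fin.cons b a : Fin (n + 1) → R) F) := by
  rw [← finSuccEquiv_coeff_coeff, finSuccEquiv_mvTaylor_cons, ← lcoeff_apply, ← coeff_mapCoeffs,
    ← algebraMap_eq, mapCoeffs_taylor, Algebra.algebraMap_self_apply, fibreCoeff]

end Semiring

variable {R : Type*} [CommRing R]

lemma multiplicityAt_cons_le (b : R) (a : Fin n → R) (i : Fin n →₀ ℕ)
    {F : MvPolynomial (Fin (n + 1)) R} (hF : fibreCoeff a i F ≠ 0) :
    multiplicityAt (Fin.cons b a : Fin (n + 1) → R) F ≤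
      i.degree + (fibreCoeff a i F).rootMultiplicity b := by
  set k := (fibreCoeff a i F).rootMultiplicity b with hk
  have coeff_ne_zero : (Polynomial.taylor b (fibreCoeff a i F)).coeff k ≠ 0 := by
    rw [hk, Polynomial.rootMultiplicity_eq_natTrailingDegree, ← Polynomial.taylor_apply]
    exact Polynomial.trailingCoeff_nonzero_iff_nonzero.2 ((Polynomial.taylor_eq_zero b _).not.2 hF)
  rw [coeff_taylor_fibreCoeff] at coeff_ne_zero
  have degree_cons : (i.cons k).degree = i.degree + k := by
    simp [Finsupp.degree_eq_sum, Fin.sum_univ_succ, add_comm]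
  exact_mod_cast degree_cons ▸ multiplicityAt_le_degree coeff_ne_zero

lemma sum_multiplicityAt_cons_le [IsDomain R] (S : Finset R) (a : Fin n → R)
    {F : MvPolynomial (Fin (n + 1)) R} (hF : F ≠ 0) :
    ∑ b ∈ S, multiplicityAt (Fin.cons b a : Fin (n + 1) → R) F ≤
      #S * multiplicityAt a (finSuccEquiv R n F).leadingCoeff +
        (finSuccEquiv R n F).natDegree := by
  have leadingCoeff_ne_zero : (finSuccEquiv R n F).leadingCoeff ≠ 0 := by simpa using hF
  obtain ⟨i, coeff_ne_zero, degree_eq⟩ := exists_degree_eq_multiplicityAt a leadingCoeff_ne_zero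
  have fibreCoeff_ne_zero : fibreCoeff a i F ≠ 0 := fun h => coeff_ne_zero <| by
    rw [Polynomial.leadingCoeff, ← coeff_fibreCoeff, h, Polynomial.coeff_zero]
  have sum_le : ∑ b ∈ S, (fibreCoeff a i F).rootMultiplicity b ≤ (finSuccEquiv R n F).natDegree :=
    (sum_rootMultiplicity_le_natDegree S _).trans (natDegree_fibreCoeff_le a i F)
  calc ∑ b ∈ S, multiplicityAt (Fin.cons b a : Fin (n + 1) → R) F
      ≤ ∑ b ∈ S, ((i.degree : ℕ∞) + (fibreCoeff a i F).rootMultiplicity b) :=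
        Finset.sum_le_sum fun b _ => multiplicityAt_cons_le b a i fibreCoeff_ne_zero
    _ = #S * i.degree + ((∑ b ∈ S, (fibreCoeff a i F).rootMultiplicity b : ℕ) : ℕ∞) := by
        simp [Finset.sum_add_distrib]
    _ ≤ #S * multiplicityAt a (finSuccEquiv R n F).leadingCoeff +
          (finSuccEquiv R n F).natDegree := by
        rw [degree_eq]
        gcongr

end Fibre

section SchwartzZippel

open MvPolynomial
open Fintype (piFinset)
open scoped Finset

local notation:70 S:70 " ^^ " n:71 => piFinset fun _ : Fin n => S

lemma sum_piFinset_const_succ {α M : Type*} [AddCommMonoid M] (S : Finset α) (n : ℕ)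
    (f : (Fin (n + 1) → α) → M) :
    ∑ P ∈ S ^^ (n + 1), f P = ∑ a ∈ S ^^ n, ∑ b ∈ S, f (Fin.cons b a) := by
  rw [← Finset.sum_product_right']
  exact (Finset.sum_equiv (Fin.consEquiv fun _ => α)
    (by simp [Fin.forall_fin_succ, Fin.consEquiv]) (by simp [Fin.consEquiv])).symm

variable {R : Type*} [CommRing R] [IsDomain R] {m : ℕ}

lemma card_mul_sum_multiplicityAt_le (S : Finset R) {F : MvPolynomial (Fin m) R} (hF : F ≠ 0) :
    #S * ∑ P ∈ S ^^ m, multiplicityAt P F ≤ F.totalDegree * #S ^ m := by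
  induction m with
  | zero =>
    have multiplicityAt_eq_zero (P : Fin 0 → R) : multiplicityAt P F = 0 := by
      obtain ⟨i, -, degree_eq⟩ := exists_degree_eq_multiplicityAt P hF
      rw [← degree_eq, Subsingleton.elim i 0, map_zero, Nat.cast_zero]
    simp [multiplicityAt_eq_zero]
  | succ n ih =>
    set ℓ := (finSuccEquiv R n F).leadingCoeff with hℓ
    set t := (finSuccEquiv R n F).natDegree
    have ℓ_ne_zero : ℓ ≠ 0 := by simpa [hℓ] using hF
    have degree_le : ℓ.totalDegree + t ≤ F.totalDegree :=
      totalDegree_coeff_finSuccEquiv_add_le F t ℓ_ne_zero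
    calc (#S : ℕ∞) * ∑ P ∈ S ^^ (n + 1), multiplicityAt P F
        = #S * ∑ a ∈ S ^^ n, ∑ b ∈ S, multiplicityAt (Fin.cons b a : Fin (n + 1) → R) F := by
          rw [sum_piFinset_const_succ]
      _ ≤ #S * ∑ a ∈ S ^^ n, (#S * multiplicityAt a ℓ + t) := by
          gcongr with a
          exact sum_multiplicityAt_cons_le S a hF
      _ = #S * (#S * ∑ a ∈ S ^^ n, multiplicityAt a ℓ) + t * #S ^ (n + 1) := by
          simp only [Finset.sum_add_distrib, ← Finset.mul_sum, Finset.sum_const,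
            Fintype.card_piFinset_const, nsmul_eq_mul, Nat.cast_pow]
          ring
      _ ≤ #S * (ℓ.totalDegree * #S ^ n) + t * #S ^ (n + 1) := by
          gcongr #S * ?_ + _
          exact ih ℓ_ne_zero
      _ = (ℓ.totalDegree + t : ℕ) * #S ^ (n + 1) := by
          push_cast
          ring
      _ ≤ F.totalDegree * #S ^ (n + 1) := by gcongr

open Classical in
lemma card_filter_le_multiplicityAt_mul_le (S : Finset R) (hm : 1 ≤ m) (s : ℕ)
    {F : MvPolynomial (Fin m) R} (hF : F ≠ 0) :
    #{P ∈ S ^^ m | s ≤ multiplicityAt P F} * s ≤ F.totalDegree * #S ^ (m - 1) := by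
  obtain ⟨k, rfl⟩ := Nat.exists_eq_add_of_le' hm
  rcases S.eq_empty_or_nonempty with rfl | hS
  · simp
  set T := {P ∈ S ^^ (k + 1) | s ≤ multiplicityAt P F}
  have card_mul_le_sum : (#T * s : ℕ∞) ≤ ∑ P ∈ S ^^ (k + 1), multiplicityAt P F :=
    calc (#T * s : ℕ∞) = #T • (s : ℕ∞) := (nsmul_eq_mul _ _).symm
      _ ≤ ∑ P ∈ T, multiplicityAt P F :=
        Finset.card_nsmul_le_sum _ _ _ fun P hP => (Finset.mem_filter.1 hP).2
      _ ≤ ∑ P ∈ S ^^ (k + 1), multiplicityAt P F :=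
        Finset.sum_le_sum_of_subset (Finset.filter_subset _ _)
  have card_mul_card_mul_le : #S * (#T * s) ≤ F.totalDegree * #S ^ (k + 1) := by
    exact_mod_cast (mul_le_mul_right card_mul_le_sum _).trans (card_mul_sum_multiplicityAt_le S hF)
  refine Nat.le_of_mul_le_mul_left ?_ hS.card_pos
  calc #S * (#T * s) ≤ F.totalDegree * #S ^ (k + 1) := card_mul_card_mul_le
    _ = #S * (F.totalDegree * #S ^ (k + 1 - 1)) := by
        rw [Nat.add_sub_cancel]
        ring

open Classical in
theorem mult_code_distance_general {R : Type*} [CommRing R] [IsDomain R] (S : Finset R)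
    {m s d : ℕ} (hm : 1 ≤ m) (hs : 1 ≤ s) :
    (∀ F : MvPolynomial (Fin m) R, F ≠ 0 → F.totalDegree ≤ d →
      (#{P ∈ S ^^ m | ∀ i : Fin m →₀ ℕ, (i.sum fun _ n => n) < s →
          eval P (mvHasseDeriv i F) = 0} : ℚ) ≤
        (d / s) * (#S : ℚ) ^ (m - 1)) ∧
    (∀ F G : MvPolynomial (Fin m) R, F.totalDegree ≤ d → G.totalDegree ≤ d → F ≠ G →
      ((#S : ℚ) ^ m - (d / s) * (#S : ℚ) ^ (m - 1)) ≤
        (#{P ∈ S ^^ m | ∃ i : Fin m →₀ ℕ, (i.sum fun _ n => n) < s ∧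
          eval P (mvHasseDeriv i F) ≠ eval P (mvHasseDeriv i G)} : ℚ)) := by
  have card_le {F : MvPolynomial (Fin m) R} (hF : F ≠ 0) (hd : F.totalDegree ≤ d) :
      (#{P ∈ S ^^ m | s ≤ multiplicityAt P F} : ℚ) ≤ (d / s) * (#S : ℚ) ^ (m - 1) := by
    rw [div_mul_eq_mul_div, le_div_iff₀ (by exact_mod_cast hs)]
    exact_mod_cast (card_filter_le_multiplicityAt_mul_le S hm s hF).trans
      (Nat.mul_le_mul_right _ hd)
  refine ⟨fun F hF hd => by simpa only [le_multiplicityAt_iff] using card_le hF hd,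
    fun F G hF hG hne => ?_⟩
  have agree_le := card_le (sub_ne_zero.2 hne) ((totalDegree_sub F G).trans (max_le hF hG))
  have agree_add_disagree := Finset.card_filter_add_card_filter_not (s := S ^^ m)
    (fun P => s ≤ multiplicityAt P (F - G))
  simp only [le_multiplicityAt_sub_iff, not_forall, exists_prop, Fintype.card_piFinset_const]
    at agree_le agree_add_disagree
  rw [← @Nat.cast_inj ℚ] at agree_add_disagree
  push_cast at agree_add_disagree
  linarith

end SchwartzZippel

/-- a nonzero `F` of degree `d` with `d/s < q` has at most `(d/s)·q^{m-1}`
points of multiplicity `≥ s`; hence the multiplicity code `Mult^s_d` (for `d < s·q`) has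
minimum Hamming distance at least `q^m − (d/s)·q^{m-1}` over the alphabet `F_q^σ`. -/
theorem mult_code_distance {Fq : Type*} [Field Fq] [Fintype Fq] {m s d : ℕ}
    (hm : 1 ≤ m) (hs : 1 ≤ s) (hd : (d : ℚ) / s < Fintype.card Fq) :
    (∀ F : MvPolynomial (Fin m) Fq, F ≠ 0 → F.totalDegree ≤ d →
      (Nat.card {P : Fin m → Fq | ∀ i : Fin m →₀ ℕ, (i.sum fun _ n => n) < s →
          MvPolynomial.eval P (mvHasseDeriv i F) = 0} : ℚ) ≤
        (d / s) * (Fintype.card Fq : ℚ) ^ (m - 1)) ∧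
    (∀ F G : MvPolynomial (Fin m) Fq, F.totalDegree ≤ d → G.totalDegree ≤ d → F ≠ G →
      ((Fintype.card Fq : ℚ) ^ m - (d / s) * (Fintype.card Fq : ℚ) ^ (m - 1)) ≤
        (Nat.card {P : Fin m → Fq | ∃ i : Fin m →₀ ℕ, (i.sum fun _ n => n) < s ∧
          MvPolynomial.eval P (mvHasseDeriv i F) ≠ MvPolynomial.eval P (mvHasseDeriv i G)} :
            ℚ)) := by
  classical
  simpa [Nat.card_eq_fintype_card, Fintype.card_subtype] using
    mult_code_distance_general Finset.univ hm hs
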